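/- Let (A,[·,·],α,β) be a regular BiHom-Lie algebra over a field K of characteristic zero and let R : A → A be a Rota-Baxter operator of weight λ ∈ K. Then (A,{·,·},▷,α,β) is a BiHom-post-Lie algebra, where {x,y} = λ[x,y] and x ▷ y = [R(x),y] for all x,y ∈ A. -/

import Mathlib

section Defs

variable (K : Type*) [Field K]
variable {A V : Type*} [AddCommGroup A] [Module K A] [AddCommGroup V] [Module K V]

/-- `f : A → A → V` is bilinear over `K`. -/
def IsBilin (f : A → A → V) : Prop :=
  (∀ y, IsLinearMap K fun x => f x y) ∧ (∀ x, IsLinearMap K fun y => f x y)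

/-- `b` is a Lie bracket on `A`. -/
def IsLieBracket (b : A → A → A) : Prop :=
  IsBilin K b ∧ (∀ x y, b x y = - b y x) ∧
    (∀ x y z, b x (b y z) + b y (b z x) + b z (b x y) = 0)

/-- `(A, b, t)` is a (left) post-Lie algebra. -/
def IsPostLie (b t : A → A → A) : Prop :=
  IsLieBracket K b ∧ IsBilin K t ∧
    (∀ x y z, t x (b y z) = b (t x y) z + b y (t x z)) ∧
    (∀ x y z, t (b x y) z =
      (t x (t y z) - t (t x y) z) - (t y (t x z) - t (t y x) z))

/-- `ρ` is a representation of the Lie algebra `(A, b)` on `V`. -/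
def IsLieRep (b : A → A → A) (ρ : A → V → V) : Prop :=
  (∀ x, IsLinearMap K (ρ x)) ∧ (∀ v, IsLinearMap K fun x => ρ x v) ∧
    (∀ x y v, ρ (b x y) v = ρ x (ρ y v) - ρ y (ρ x v))

/-- `(A, b, α, β)` is a BiHom-Lie algebra. -/
def IsBiHomLie (b : A → A → A) (α β : A → A) : Prop :=
  IsBilin K b ∧ IsLinearMap K α ∧ IsLinearMap K β ∧
    (∀ x, α (β x) = β (α x)) ∧
    (∀ x y, α (b x y) = b (α x) (α y)) ∧
    (∀ x y, β (b x y) = b (β x) (β y)) ∧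
    (∀ x y, b (β x) (α y) = - b (β y) (α x)) ∧
    (∀ x y z, b (β (β x)) (b (β y) (α z)) + b (β (β y)) (b (β z) (α x)) +
        b (β (β z)) (b (β x) (α y)) = 0)

/-- `(V, ρ, φ, ψ)` is a representation of the BiHom-Lie algebra `(A, b, α, β)`. -/
def IsBiHomRep (b : A → A → A) (α β : A → A) (ρ : A → V → V) (φ ψ : V → V) : Prop :=
  IsLinearMap K φ ∧ IsLinearMap K ψ ∧ (∀ v, φ (ψ v) = ψ (φ v)) ∧
    (∀ x, IsLinearMap K (ρ x)) ∧ (∀ v, IsLinearMap K fun x => ρ x v) ∧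
    (∀ x v, ρ (α x) (φ v) = φ (ρ x v)) ∧
    (∀ x v, ρ (β x) (ψ v) = ψ (ρ x v)) ∧
    (∀ x y v, ρ (b (β x) y) (ψ v) = ρ (α (β x)) (ρ y v) - ρ (β y) (ρ (α x) v))

/-- `(A, b, t, α, β)` is a (left) BiHom-post-Lie algebra. -/
def IsBiHomPostLie (b t : A → A → A) (α β : A → A) : Prop :=
  IsBiHomLie K b α β ∧ IsBilin K t ∧
    (∀ x y, α (t x y) = t (α x) (α y)) ∧
    (∀ x y, β (t x y) = t (β x) (β y)) ∧
    (∀ x y z, t (α (β x)) (b y z) = b (t (β x) y) (β z) + b (β y) (t (α x) z)) ∧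
    (∀ x y z, t (b (β x) (α y)) (β z) =
      (t (α (β x)) (t (α y) z) - t (t (β x) (α y)) (β z)) -
      (t (α (β y)) (t (α x) z) - t (t (β y) (α x)) (β z)))

/-- `(V, bv, ρ, φ, ψ)` is an `A`-module `K`-algebra over the BiHom-Lie algebra
`(A, b, α, β)`. -/
def IsModuleKAlgebra (b : A → A → A) (α β : A → A) (bv : V → V → V)
    (ρ : A → V → V) (φ ψ : V → V) : Prop :=
  IsBiHomLie K bv φ ψ ∧ IsBiHomRep K b α β ρ φ ψ ∧
    (∀ x u v, ρ (α (β x)) (bv u v) = bv (ρ (β x) u) (ψ v) + bv (ψ u) (ρ (α x) v))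

end Defs

/-!
A Rota-Baxter operator is a relative Rota-Baxter operator for the adjoint action. For any relative
Rota-Baxter operator `T` on an `A`-module `K`-algebra `V`, put `u ▷ v = ρ (T u) v`: the derivation
condition on `▷` is the compatibility of `ρ` with the bracket of `V`, and the associator condition
comes from evaluating `ρ [T (ψ u), T (φ v)]` in two ways, by the representation axiom and by the
Rota-Baxter identity. The BiHom axioms constrain the bracket of `A` only on images of `α` and `β`;
surjectivity of these maps turns them into the twisted Leibniz rule that makes `A` an `A`-module
`K`-algebra under the adjoint action.
-/

section RelRotaBaxter

variable {K : Type*} [Field K]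
variable {A V : Type*} [AddCommGroup A] [Module K A] [AddCommGroup V] [Module K V]

/-- A relative Rota-Baxter operator (`𝒪`-operator) of weight `lam` from `(V, bv, ρ, φ, ψ)` to
`(A, b, α, β)`. The identity
`[T u, T v] = T (ρ (T u) v - ρ (T (φ⁻¹ (ψ v))) (φ (ψ⁻¹ u)) + lam • [u, v])` is stated at
`ψ u` and `φ v`, so that no inverses are needed. For `ρ = bv = b` and `α`, `β` bijective it says
that `T` is a Rota-Baxter operator of weight `lam` on `A`. -/
structure IsRelRotaBaxter (b : A → A → A) (α β : A → A) (bv : V → V → V) (ρ : A → V → V)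
    (φ ψ : V → V) (lam : K) (T : V → A) : Prop where
  isLinearMap : IsLinearMap K T
  map_left_twist : ∀ u, T (φ u) = α (T u)
  map_right_twist : ∀ u, T (ψ u) = β (T u)
  bracket_map : ∀ u v, b (T (ψ u)) (T (φ v)) =
    T (ρ (T (ψ u)) (φ v) - ρ (T (ψ v)) (φ u) + lam • bv (ψ u) (φ v))

theorem IsBilin.const_smul {f : A → A → V} (hf : IsBilin K f) (c : K) :
    IsBilin K fun x y => c • f x y :=
  ⟨fun y => (c • (hf.1 y).mk').isLinear, fun x => (c • (hf.2 x).mk').isLinear⟩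

theorem IsBiHomLie.const_smul {b : A → A → A} {α β : A → A} (hb : IsBiHomLie K b α β) (c : K) :
    IsBiHomLie K (fun x y => c • b x y) α β := by
  obtain ⟨hbil, hα, hβ, hαβ, hαb, hβb, hskew, hjac⟩ := hb
  refine ⟨hbil.const_smul c, hα, hβ, hαβ, fun x y => ?_, fun x y => ?_, fun x y => ?_,
    fun x y z => ?_⟩
  · rw [hα.map_smul, hαb]
  · rw [hβ.map_smul, hβb]
  · simp only [hskew x, smul_neg]
  · simp only [(hbil.2 _).map_smul, ← smul_add, hjac, smul_zero]

section Adjoint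

variable {b : A → A → A} {α β : A → A}

theorem IsBiHomLie.leibniz (hb : IsBiHomLie K b α β) (hα : Function.Surjective α)
    (hβ : Function.Surjective β) (x y z : A) :
    b (α (β x)) (b y z) = b (b (β x) y) (β z) + b (β y) (b (α x) z) := by
  obtain ⟨hbil, -, -, hαβ, hαb, hβb, hskew, hjac⟩ := hb
  obtain ⟨x, rfl⟩ := hβ x
  obtain ⟨y, rfl⟩ := hβ y
  obtain ⟨z, rfl⟩ := hα z
  have second_term : b (β (β y)) (b (β z) (α (α x))) = -b (β (β y)) (b (α (β x)) (α z)) := by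
    rw [hskew, ← hαβ x, (hbil.2 _).map_neg]
  have third_term : b (β (β z)) (b (β (α x)) (α y)) = -b (b (β (β x)) (β y)) (β (α z)) := by
    rw [← hαβ x, ← hαb, hskew, hβb, hαβ z]
  have jacobi := hjac (α x) y z
  rw [second_term, third_term, ← hαβ x, ← hαβ (β x)] at jacobi
  rw [← sub_eq_zero, ← jacobi]
  abel

theorem IsBiHomLie.isBiHomRep_adjoint (hb : IsBiHomLie K b α β) (hα : Function.Surjective α)
    (hβ : Function.Surjective β) : IsBiHomRep K b α β b α β := by
  have hleibniz := hb.leibniz hα hβ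
  obtain ⟨hbil, hαlin, hβlin, hαβ, hαb, hβb, -, -⟩ := hb
  exact ⟨hαlin, hβlin, hαβ, hbil.2, hbil.1, fun x v => (hαb x v).symm,
    fun x v => (hβb x v).symm, fun x y v => eq_sub_of_add_eq (hleibniz x y v).symm⟩

theorem IsBiHomLie.isModuleKAlgebra_adjoint (hb : IsBiHomLie K b α β)
    (hα : Function.Surjective α) (hβ : Function.Surjective β) :
    IsModuleKAlgebra K b α β b b α β :=
  ⟨hb, hb.isBiHomRep_adjoint hα hβ, hb.leibniz hα hβ⟩

theorem IsBiHomLie.isRelRotaBaxter_adjoint (hb : IsBiHomLie K b α β) {R : A → A} {lam : K}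
    (hR : IsLinearMap K R) (hRα : ∀ x, R (α x) = α (R x)) (hRβ : ∀ x, R (β x) = β (R x))
    (hRB : ∀ x y, b (R x) (R y) = R (b (R x) y + b x (R y) + lam • b x y)) :
    IsRelRotaBaxter b α β b b α β lam R where
  isLinearMap := hR
  map_left_twist := hRα
  map_right_twist := hRβ
  bracket_map u v := by
    obtain ⟨-, -, -, -, -, -, hskew, -⟩ := hb
    have swap : b (β u) (R (α v)) = -b (R (β v)) (α u) := by rw [hRα, hskew, hRβ]
    rw [hRB, swap, ← sub_eq_add_neg]

end Adjoint

section PostLie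

variable {b : A → A → A} {α β : A → A} {bv : V → V → V} {ρ : A → V → V} {φ ψ : V → V}
  {lam : K} {T : V → A}

theorem IsBiHomRep.isBilin_comp (hρ : IsBiHomRep K b α β ρ φ ψ) (hT : IsLinearMap K T) :
    IsBilin K fun u v => ρ (T u) v := by
  obtain ⟨-, -, -, hρr, hρl, -⟩ := hρ
  exact ⟨fun v => ((hρl v).mk'.comp hT.mk').isLinear, fun u => hρr (T u)⟩

theorem IsRelRotaBaxter.act_map_smul_bracket (hT : IsRelRotaBaxter b α β bv ρ φ ψ lam T)
    (hρ : IsBiHomRep K b α β ρ φ ψ) (u v w : V) :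
    ρ (T (lam • bv (ψ u) (φ v))) (ψ w) =
      (ρ (T (φ (ψ u))) (ρ (T (φ v)) w) - ρ (T (ρ (T (ψ u)) (φ v))) (ψ w)) -
      (ρ (T (φ (ψ v))) (ρ (T (φ u)) w) - ρ (T (ρ (T (ψ v)) (φ u))) (ψ w)) := by
  obtain ⟨-, -, hφψ, -, hρl, -, -, hρb⟩ := hρ
  have act_bracket : ρ (b (T (ψ u)) (T (φ v))) (ψ w) =
      ρ (T (φ (ψ u))) (ρ (T (φ v)) w) - ρ (T (φ (ψ v))) (ρ (T (φ u)) w) := by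
    rw [hT.map_right_twist u, hρb, hφψ v]
    simp only [hT.map_left_twist, hT.map_right_twist]
  have act_expansion : ρ (b (T (ψ u)) (T (φ v))) (ψ w) =
      ρ (T (ρ (T (ψ u)) (φ v))) (ψ w) - ρ (T (ρ (T (ψ v)) (φ u))) (ψ w) +
        ρ (T (lam • bv (ψ u) (φ v))) (ψ w) := by
    rw [hT.bracket_map, hT.isLinearMap.map_add, hT.isLinearMap.map_sub, (hρl _).map_add,
      (hρl _).map_sub]
  rw [sub_sub_sub_comm, ← act_bracket, act_expansion, add_sub_cancel_left]

theorem IsRelRotaBaxter.isBiHomPostLie (hT : IsRelRotaBaxter b α β bv ρ φ ψ lam T)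
    (hV : IsModuleKAlgebra K b α β bv ρ φ ψ) :
    IsBiHomPostLie K (fun u v => lam • bv u v) (fun u v => ρ (T u) v) φ ψ := by
  obtain ⟨hbv, hρ, leibniz⟩ := hV
  have ⟨_, _, _, hρr, _, hρφ, hρψ, _⟩ := hρ
  refine ⟨hbv.const_smul lam, hρ.isBilin_comp hT.isLinearMap, fun u v => ?_, fun u v => ?_,
    fun u v w => ?_, hT.act_map_smul_bracket hρ⟩
  · simp only [hT.map_left_twist, hρφ]
  · simp only [hT.map_right_twist, hρψ]
  · simp only [(hρr _).map_smul, hT.map_left_twist, hT.map_right_twist, leibniz, smul_add]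

end PostLie

end RelRotaBaxter

theorem biHomPostLie_of_rotaBaxter_general {K A : Type*} [Field K]
    [AddCommGroup A] [Module K A] (b : A → A → A) (α β : A → A) (R : A → A)
    (lam : K)
    (hb : IsBiHomLie K b α β)
    (hα : Function.Surjective α) (hβ : Function.Surjective β)
    (hR : IsLinearMap K R)
    (hRα : ∀ x, R (α x) = α (R x)) (hRβ : ∀ x, R (β x) = β (R x))
    (hRB : ∀ x y, b (R x) (R y) = R (b (R x) y + b x (R y) + lam • b x y)) :
    IsBiHomPostLie K (fun x y => lam • b x y) (fun x y => b (R x) y) α β :=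
  (hb.isRelRotaBaxter_adjoint hR hRα hRβ hRB).isBiHomPostLie (hb.isModuleKAlgebra_adjoint hα hβ)

/-- a Rota-Baxter operator of weight `λ` on a regular
BiHom-Lie algebra gives a BiHom-post-Lie algebra structure. -/
theorem biHomPostLie_of_rotaBaxter {K A : Type*} [Field K] [CharZero K]
    [AddCommGroup A] [Module K A] (b : A → A → A) (α β : A → A) (R : A → A)
    (lam : K)
    (hb : IsBiHomLie K b α β)
    (hαbij : Function.Bijective α) (hβbij : Function.Bijective β)
    (hR : IsLinearMap K R)
    (hRα : ∀ x, R (α x) = α (R x)) (hRβ : ∀ x, R (β x) = β (R x))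
    (hRB : ∀ x y, b (R x) (R y) = R (b (R x) y + b x (R y) + lam • b x y)) :
    IsBiHomPostLie K (fun x y => lam • b x y) (fun x y => b (R x) y) α β := by
  exact biHomPostLie_of_rotaBaxter_general b α β R lam hb hαbij.surjective hβbij.surjective
    hR hRα hRβ hRB
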